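/- Let w be a Kreweras word of length 3n. Then evac*(w) is obtained from evac(w) by replacing every letter B with C and every letter C with B. -/

import Mathlib

/-- The three letters of a Kreweras word. -/
inductive KLetter : Type
  | A | B | C
deriving DecidableEq, Repr

open KLetter

/-- `w` is a Kreweras word of length `3 * n`: it has `n` `A`'s, `n` `B`'s, `n` `C`'s,
and every prefix has at least as many `A`'s as `B`'s and at least as many `A`'s as `C`'s. -/
def IsKrewerasWord (n : ℕ) (w : List KLetter) : Prop :=
  w.length = 3 * n ∧ w.count A = n ∧ w.count B = n ∧ w.count C = n ∧
  ∀ k : ℕ, (w.take k).count B ≤ (w.take k).count A ∧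
           (w.take k).count C ≤ (w.take k).count A

/-- `kiota w` is the smallest index `ι ≥ 1` (1-indexed) such that the prefix of
length `ι` of `w` has equally many `A`'s as `B`'s, or equally many `A`'s as `C`'s
(and `0` if no such index exists). -/
def kiota (w : List KLetter) : ℕ :=
  (((List.range (w.length + 1)).filter fun k =>
      decide (1 ≤ k) &&
      (((w.take k).count A == (w.take k).count B) ||
       ((w.take k).count A == (w.take k).count C))).headD 0)

/-- Promotion of a Kreweras word:
`pro w = (w₂, …, w_{ι-1}, A, w_{ι+1}, …, w_{3n}, w_ι)` where `ι = kiota w`. -/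
def pro (w : List KLetter) : List KLetter :=
  ((w.drop 1).set (kiota w - 2) A) ++ [w.getD (kiota w - 1) A]

/-- The trip permutation `σ_w` of a Kreweras word of length `3 * n`, as a function on
1-indexed positions: `σ_w i` is the unique element of `{1, …, 3n}` congruent to
`kiota (pro^[i-1] w) + i - 1` modulo `3 * n`. -/
def ksigma (n : ℕ) (w : List KLetter) (i : ℕ) : ℕ :=
  (kiota (pro^[i - 1] w) + i - 2) % (3 * n) + 1

/-- `keps w i` is the letter of `pro^[i-1] w` in (1-indexed) position `kiota (pro^[i-1] w)`. -/
def keps (w : List KLetter) (i : ℕ) : KLetter :=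
  (pro^[i - 1] w).getD (kiota (pro^[i - 1] w) - 1) A

/-- The negation swapping `B` and `C` (and fixing `A`). -/
def negL : KLetter → KLetter
  | A => A
  | B => C
  | C => B

open Classical in
/-- The involution `τ_i` on Kreweras words of length `3 * n`: swap the letters in
(1-indexed) positions `i` and `i + 1` if the result is again a Kreweras word,
and otherwise do nothing. -/
noncomputable def tau (n i : ℕ) (w : List KLetter) : List KLetter :=
  let w' := (w.set (i - 1) (w.getD i A)).set i (w.getD (i - 1) A)
  if IsKrewerasWord n w' then w' else w

/-- `tauDown n j = τ_j ∘ τ_{j-1} ∘ ⋯ ∘ τ_1`. -/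
noncomputable def tauDown (n : ℕ) : ℕ → List KLetter → List KLetter
  | 0, w => w
  | j + 1, w => tau n (j + 1) (tauDown n j w)

/-- `evacAux n j = (tauDown n 1) ∘ (tauDown n 2) ∘ ⋯ ∘ (tauDown n j)`. -/
noncomputable def evacAux (n : ℕ) : ℕ → List KLetter → List KLetter
  | 0, w => w
  | j + 1, w => evacAux n j (tauDown n (j + 1) w)

/-- Evacuation on Kreweras words of length `3 * n`:
`evac = (τ_1) ∘ (τ_2 ∘ τ_1) ∘ ⋯ ∘ (τ_{3n-1} ∘ ⋯ ∘ τ_2 ∘ τ_1)`. -/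
noncomputable def evac (n : ℕ) (w : List KLetter) : List KLetter :=
  evacAux n (3 * n - 1) w

/-- `tauAsc n k c = τ_{k+c-1} ∘ ⋯ ∘ τ_{k+1} ∘ τ_k`. -/
noncomputable def tauAsc (n k : ℕ) : ℕ → List KLetter → List KLetter
  | 0, w => w
  | j + 1, w => tau n (k + j) (tauAsc n k j w)

/-- `evacStarAux n j = (tauAsc n 1 (3n-1)) ∘ (tauAsc n 2 (3n-2)) ∘ ⋯ ∘ (tauAsc n j (3n-j))`. -/
noncomputable def evacStarAux (n : ℕ) : ℕ → List KLetter → List KLetter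
  | 0, w => w
  | j + 1, w => evacStarAux n j (tauAsc n (j + 1) (3 * n - (j + 1)) w)

/-- Dual evacuation on Kreweras words of length `3 * n`:
`evac* = (τ_{3n-1} ∘ ⋯ ∘ τ_1) ∘ (τ_{3n-1} ∘ ⋯ ∘ τ_2) ∘ ⋯ ∘ (τ_{3n-1})`. -/
noncomputable def evacStar (n : ℕ) (w : List KLetter) : List KLetter :=
  evacStarAux n (3 * n - 1) w

/-- The three-element "V"-shaped poset: `a < b`, `a < c`, with `b`, `c` incomparable. -/
inductive VP : Type
  | a | b | c
deriving DecidableEq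

instance : PartialOrder VP where
  le x y := x = y ∨ x = VP.a
  le_refl x := Or.inl rfl
  le_trans x y z hxy hyz := by
    rcases hxy with rfl | rfl
    · exact hyz
    · exact Or.inr rfl
  le_antisymm x y hxy hyx := by
    rcases hxy with rfl | rfl
    · rfl
    · rcases hyx with rfl | rfl <;> rfl

/-- The labeling of elements of `V(n) = VP × Fin n` by letters. -/
def vlabel {n : ℕ} (p : VP × Fin n) : KLetter :=
  match p.1 with
  | VP.a => A
  | VP.b => B
  | VP.c => C

/-- `L` is a linear extension of `V(n) = VP × Fin n` (with the product order):
a list of all elements of `V(n)`, each appearing once, such that `L_i ≤ L_j`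
implies `i ≤ j`. -/
def IsLinearExtension (n : ℕ) (L : List (VP × Fin n)) : Prop :=
  L.Nodup ∧ (∀ p : VP × Fin n, p ∈ L) ∧
  ∀ i j : Fin L.length, L.get i ≤ L.get j → (i : ℕ) ≤ (j : ℕ)

/-- A connected Kreweras word: a Kreweras word of length `3 * n` having no proper
nonempty consecutive substring which is itself a Kreweras word. -/
def ConnectedKrewerasWord (n : ℕ) (w : List KLetter) : Prop :=
  IsKrewerasWord n w ∧
  ∀ (u : List KLetter) (m : ℕ), u <:+: w → u ≠ [] → u ≠ w → ¬ IsKrewerasWord m u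

/-!
A Kreweras word is a closed walk in an orthant, and its promotion `τ_{3n-1} ∘ ⋯ ∘ τ_1` is the
exchange `b g a v ↦ g b v a`, where the prefix `b g a` is the first to return to zero in a
coordinate moved by `b`. The same rule applied to reversed words undoes promotion. The relations
between the `τ_i` give `evac* = pro^{3n} ∘ evac`, so the theorem says that `3n` promotions swap `B`
and `C`.

Promoting `p ++ M` as often as `p` has letters changes `M` in a way that does not depend on `p`, and
what is appended to it depends on `M` only through its displacement. Hence, if `u` ends at height
`e` on the axis of `c`, the middle of the promotion orbit of `u ++ v` can be read off from the
orbits of the words `u c^e` and `A^e d^e v`, in which the missing half is replaced by a standard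
one; here `d` is the other letter among `B` and `C`. If the claim holds for these two words it
therefore holds for `u ++ v`, and every word is reached from `A^e d^e c^e` by such gluings and by
promotions.
-/

namespace Kreweras

section Walk

variable {α ι : Type*} (f : α → ι → ℤ)

/-- The displacement of the walk on the lattice `ι → ℤ` that makes the step `f a` for each letter
`a` of the word. -/
def walk (l : List α) : ι → ℤ :=
  (l.map f).sum

@[simp] lemma walk_nil : walk f [] = 0 := rfl

@[simp] lemma walk_cons (a : α) (l : List α) : walk f (a :: l) = f a + walk f l := by
  simp [walk]

@[simp] lemma walk_append (l m : List α) : walk f (l ++ m) = walk f l + walk f m := by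
  simp [walk]

@[simp] lemma walk_replicate (k : ℕ) (a : α) : walk f (List.replicate k a) = k • f a := by
  simp [walk]

@[simp] lemma walk_reverse (l : List α) : walk f l.reverse = walk f l := by
  induction l with
  | nil => rfl
  | cons a l ih => simp [ih, add_comm]

lemma walk_map {σ : α → α} {τ : ι → ι} (hf : ∀ a i, f (σ a) i = f a (τ i)) (l : List α) :
    walk f (l.map σ) = walk f l ∘ τ := by
  induction l with
  | nil => rfl
  | cons a l ih => rw [List.map_cons, walk_cons, walk_cons, ih, funext (hf a)]; rfl

lemma walk_neg (l : List α) : walk (-f) l = -walk f l := by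
  induction l with
  | nil => simp
  | cons a l ih => simp [ih, add_comm]

/-- The walk read off from `l` and started at `x` visits only points of `S`, endpoints included. -/
def StaysIn (S : Set (ι → ℤ)) (x : ι → ℤ) (l : List α) : Prop :=
  ∀ p, p <+: l → x + walk f p ∈ S

variable {f} {S S' : Set (ι → ℤ)} {x y z : ι → ℤ}

lemma StaysIn.start_mem {l : List α} (h : StaysIn f S x l) : x ∈ S := by
  simpa using h [] List.nil_prefix

lemma StaysIn.end_mem {l : List α} (h : StaysIn f S x l) : x + walk f l ∈ S :=
  h l List.prefix_rfl

@[simp] lemma staysIn_nil : StaysIn f S x [] ↔ x ∈ S := by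
  simp [StaysIn]

@[simp] lemma staysIn_cons {a : α} {l : List α} :
    StaysIn f S x (a :: l) ↔ x ∈ S ∧ StaysIn f S (x + f a) l := by
  refine ⟨fun h => ⟨h.start_mem, fun p hp => ?_⟩, fun ⟨hx, h⟩ p hp => ?_⟩
  · simpa [add_assoc] using h (a :: p) (by simpa using hp)
  · rcases List.prefix_cons_iff.1 hp with rfl | ⟨q, rfl, hq⟩
    · simpa using hx
    · simpa [add_assoc] using h q hq

lemma staysIn_append {l m : List α} :
    StaysIn f S x (l ++ m) ↔ StaysIn f S x l ∧ StaysIn f S (x + walk f l) m := by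
  induction l generalizing x with
  | nil => simpa using fun h => h.start_mem
  | cons a l ih => simp [ih, and_assoc, add_assoc]

lemma StaysIn.translate {l : List α} (h : StaysIn f S x l) (hz : ∀ y ∈ S, y + z ∈ S') :
    StaysIn f S' (x + z) l := fun p hp => by
  simpa [add_right_comm] using hz _ (h p hp)

lemma StaysIn.mono_start {l : List α} (h : StaysIn f (Set.Ici 0) x l) (hxy : x ≤ y) :
    StaysIn f (Set.Ici 0) y l := by
  have := h.translate (z := y - x) (S' := Set.Ici 0) fun u hu => add_nonneg hu (sub_nonneg.2 hxy)
  simpa using this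

lemma StaysIn.map {σ : α → α} {τ : ι → ι} (hf : ∀ a i, f (σ a) i = f a (τ i)) {l : List α}
    (h : StaysIn f (Set.Ici 0) x l) : StaysIn f (Set.Ici 0) (x ∘ τ) (l.map σ) := fun p hp i => by
  obtain ⟨q, hq, rfl⟩ := List.prefix_map_iff.1 hp
  rw [walk_map f hf]
  exact h q hq (τ i)

lemma StaysIn.reverse {l : List α} (h : StaysIn f S x l) :
    StaysIn (-f) S (x + walk f l) l.reverse := fun p hp => by
  obtain ⟨q, hq⟩ := List.reverse_suffix.2 hp
  rw [List.reverse_reverse] at hq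
  have hqS := h q ⟨_, hq⟩
  rw [← hq, walk_append, walk_reverse, walk_neg]
  convert hqS using 1
  abel

lemma staysIn_replicate {k : ℕ} {a : α} : StaysIn f (Set.Ici 0) x (List.replicate k a) ↔
    0 ≤ x ∧ 0 ≤ x + k • f a := by
  refine ⟨fun h => ⟨h.start_mem, by simpa using h.end_mem⟩, fun ⟨h₀, h₁⟩ p hp i => ?_⟩
  obtain ⟨hle, hp⟩ := List.prefix_replicate_iff.1 hp
  have h₀ : 0 ≤ x i := h₀ i
  have h₁ : 0 ≤ x i + k • f a i := h₁ i
  rw [hp, walk_replicate]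
  change 0 ≤ x i + p.length • f a i
  rcases le_total 0 (f a i) with h | h
  · positivity
  · linarith [nsmul_le_nsmul_left_of_nonpos h hle]

variable (f) in
/-- `w` is an excursion in the orthant: a closed walk from the origin with nonnegative
coordinates. -/
def IsExcursion (w : List α) : Prop :=
  StaysIn f (Set.Ici 0) 0 w ∧ walk f w = 0

lemma isExcursion_append {l m : List α} :
    IsExcursion f (l ++ m) ↔
      StaysIn f (Set.Ici 0) 0 l ∧ StaysIn f (Set.Ici 0) (walk f l) m ∧ walk f l + walk f m = 0 := by
  simp [IsExcursion, staysIn_append, and_assoc]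

lemma IsExcursion.append_iff {l m : List α} (hl : IsExcursion f l) :
    IsExcursion f (l ++ m) ↔ IsExcursion f m := by
  rw [isExcursion_append, hl.2, zero_add]
  exact and_iff_right hl.1

lemma IsExcursion.reverse {w : List α} (hw : IsExcursion f w) : IsExcursion (-f) w.reverse := by
  refine ⟨?_, by simp [walk_neg, hw.2]⟩
  simpa [hw.2] using hw.1.reverse

lemma IsExcursion.map {σ : α → α} {τ : ι → ι} (hf : ∀ a i, f (σ a) i = f a (τ i)) {w : List α}
    (hw : IsExcursion f w) : IsExcursion f (w.map σ) :=
  ⟨hw.1.map hf, by rw [walk_map f hf, hw.2]; rfl⟩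

end Walk

section Exchange

variable {α ι : Type*} (f : α → ι → ℤ)

/-- The points whose coordinates are positive wherever the step `f b` does not vanish; these are
the coordinates that `exchange` watches when the first letter is `b`. -/
def activePos (b : α) : Set (ι → ℤ) :=
  {x | ∀ i, f b i ≠ 0 → 0 < x i}

open Classical in
/-- The scan behind `exchange`: the walk stands at `x`, the letter `b` has been taken out, and it
is put in place of the first letter at which a coordinate moved by `b` vanishes; the letter it
replaces goes to the end. If there is no such letter, `b` itself goes to the end. -/
noncomputable def exchangeFrom (b : α) : (ι → ℤ) → List α → List α
  | _, [] => [b]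
  | x, a :: l =>
    if ∃ i, f b i ≠ 0 ∧ x i + f a i = 0 then b :: (l ++ [a]) else a :: exchangeFrom b (x + f a) l

/-- The exchange `b g a v ↦ g b v a`, where `b g a` is the shortest nonempty prefix whose walk
returns to zero in one of the coordinates moved by `b`. On Kreweras words this is promotion; on
reversed Kreweras words, where a first letter `B` or `C` moves one coordinate only, it is inverse
promotion. -/
noncomputable def exchange : List α → List α
  | [] => []
  | b :: l => exchangeFrom f b (f b) l

/-- The walk from `x` along `g` and then `d` first meets a zero of a coordinate moved by `b` in
its last step. -/
def IsFirstReturn (b : α) (x : ι → ℤ) (g : List α) (d : α) : Prop :=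
  StaysIn f (activePos f b) x g ∧ ∃ i, f b i ≠ 0 ∧ x i + walk f g i + f d i = 0

variable {f} {b d : α} {x : ι → ℤ} {g v w : List α}

lemma exchangeFrom_append (hg : StaysIn f (activePos f b) x g) (l : List α) :
    exchangeFrom f b x (g ++ l) = g ++ exchangeFrom f b (x + walk f g) l := by
  induction g generalizing x with
  | nil => simp
  | cons a g ih =>
    rw [staysIn_cons] at hg
    have hne : ¬ ∃ i, f b i ≠ 0 ∧ x i + f a i = 0 := fun ⟨i, hi, h0⟩ =>
      (hg.2.start_mem i hi).ne' h0
    simp [exchangeFrom, hne, ih hg.2, add_assoc]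

lemma IsFirstReturn.exchangeFrom_eq (h : IsFirstReturn f b x g d) (v : List α) :
    exchangeFrom f b x (g ++ d :: v) = g ++ b :: (v ++ [d]) := by
  obtain ⟨hg, hret⟩ := h
  rw [exchangeFrom_append hg, exchangeFrom, if_pos (by simpa using hret)]

lemma IsFirstReturn.exchange_eq (h : IsFirstReturn f b (f b) g d) (v : List α) :
    exchange f (b :: (g ++ d :: v)) = g ++ b :: (v ++ [d]) :=
  h.exchangeFrom_eq v

lemma length_exchangeFrom (l : List α) : (exchangeFrom f b x l).length = l.length + 1 := by
  induction l generalizing x with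
  | nil => rfl
  | cons a l ih => rw [exchangeFrom]; split_ifs <;> simp [ih]

lemma length_exchange (w : List α) : (exchange f w).length = w.length := by
  cases w with
  | nil => rfl
  | cons b l => exact length_exchangeFrom l

lemma length_iterate_exchange (k : ℕ) (w : List α) : ((exchange f)^[k] w).length = w.length := by
  induction k with
  | zero => rfl
  | succ k ih => rw [Function.iterate_succ_apply', length_exchange, ih]

lemma exchangeFrom_map {σ : α → α} {τ : ι → ι} (hτ : τ.Surjective)
    (hf : ∀ a i, f (σ a) i = f a (τ i)) (l : List α) :
    exchangeFrom f (σ b) (x ∘ τ) (l.map σ) = (exchangeFrom f b x l).map σ := by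
  induction l generalizing x with
  | nil => rfl
  | cons a l ih =>
    have hret : (∃ i, f (σ b) i ≠ 0 ∧ (x ∘ τ) i + f (σ a) i = 0) ↔
        ∃ i, f b i ≠ 0 ∧ x i + f a i = 0 := by
      simp only [hf, Function.comp_apply, ← hτ.exists (p := fun i => f b i ≠ 0 ∧ x i + f a i = 0)]
    have hstate : x ∘ τ + f (σ a) = (x + f a) ∘ τ := funext fun i => by simp [hf]
    rw [List.map_cons, exchangeFrom, exchangeFrom, hstate, ih]
    by_cases h : ∃ i, f b i ≠ 0 ∧ x i + f a i = 0
    · rw [if_pos h, if_pos (hret.2 h)]; simp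
    · rw [if_neg h, if_neg (mt hret.1 h), List.map_cons]

lemma exchange_map {σ : α → α} {τ : ι → ι} (hτ : τ.Surjective)
    (hf : ∀ a i, f (σ a) i = f a (τ i)) (w : List α) :
    exchange f (w.map σ) = (exchange f w).map σ := by
  cases w with
  | nil => rfl
  | cons b l =>
    have hstart : f (σ b) = f b ∘ τ := funext (hf b)
    rw [List.map_cons, exchange, exchange, hstart, exchangeFrom_map hτ hf]

variable (f) in
/-- The step sets for which `exchange` inverts itself up to reversal. The last condition says that
each coordinate is raised by at most one letter and lowered by at most one letter. -/
structure IsCoherentStep : Prop where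
  abs_le_one : ∀ a i, |f a i| ≤ 1
  nonneg_or_nonpos : ∀ a, 0 ≤ f a ∨ f a ≤ 0
  ne_zero : ∀ a, f a ≠ 0
  eq_of_apply_eq : ∀ {a b i}, f a i ≠ 0 → f a i = f b i → a = b

namespace IsCoherentStep

lemma neg (hf : IsCoherentStep f) : IsCoherentStep (-f) where
  abs_le_one a i := by simpa using hf.abs_le_one a i
  nonneg_or_nonpos a := by simpa using (hf.nonneg_or_nonpos a).symm
  ne_zero a := by simpa using hf.ne_zero a
  eq_of_apply_eq h₀ h := hf.eq_of_apply_eq (by simpa using h₀) (by simpa using h)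

lemma neg_one_le (hf : IsCoherentStep f) (a : α) (i : ι) : -1 ≤ f a i :=
  (abs_le.1 (hf.abs_le_one a i)).1

lemma le_one (hf : IsCoherentStep f) (a : α) (i : ι) : f a i ≤ 1 :=
  (abs_le.1 (hf.abs_le_one a i)).2

lemma nonneg_of_pos (hf : IsCoherentStep f) {a : α} {i : ι} (h : 0 < f a i) : 0 ≤ f a :=
  (hf.nonneg_or_nonpos a).resolve_right fun h' => (h' i).not_gt h

lemma nonpos_of_neg (hf : IsCoherentStep f) {a : α} {i : ι} (h : f a i < 0) : f a ≤ 0 :=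
  (hf.nonneg_or_nonpos a).resolve_left fun h' => (h' i).not_gt h

lemma eq_one_of_nonneg (hf : IsCoherentStep f) {a : α} {i : ι} (h : 0 ≤ f a) (hi : f a i ≠ 0) :
    f a i = 1 :=
  (hf.le_one a i).antisymm (Int.add_one_le_of_lt ((h i).lt_of_ne' hi))

lemma staysIn_activePos_or_exists (hf : IsCoherentStep f) (hx : x ∈ activePos f b) (l : List α) :
    StaysIn f (activePos f b) x l ∨ ∃ g d v, l = g ++ d :: v ∧ IsFirstReturn f b x g d := by
  induction l generalizing x with
  | nil => exact .inl (by simpa)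
  | cons a l ih =>
    by_cases hret : ∃ i, f b i ≠ 0 ∧ x i + f a i = 0
    · exact .inr ⟨[], a, l, rfl, by simpa using hx, by simpa using hret⟩
    · have hxa : x + f a ∈ activePos f b := fun i hi => by
        have := hx i hi
        have := hf.neg_one_le a i
        have : x i + f a i ≠ 0 := fun h => hret ⟨i, hi, h⟩
        simp only [Pi.add_apply]
        omega
      rcases ih hxa with h | ⟨g, d, v, rfl, hg, i, hi, h0⟩
      · exact .inl (by simp [hx, h])
      · exact .inr ⟨a :: g, d, v, rfl, by simp [hx, hg], i, hi, by simpa [add_assoc] using h0⟩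

end IsCoherentStep

lemma IsExcursion.nonneg_head {b : α} {l : List α} (h : IsExcursion f (b :: l)) : 0 ≤ f b := by
  simpa using (staysIn_cons.1 h.1).2.start_mem

lemma IsCoherentStep.head_mem_activePos (hf : IsCoherentStep f) (hb : 0 ≤ f b) :
    f b ∈ activePos f b := fun i hi => by
  rw [hf.eq_one_of_nonneg hb hi]; exact one_pos

lemma IsExcursion.exists_isFirstReturn (hf : IsCoherentStep f) {l : List α}
    (h : IsExcursion f (b :: l)) : ∃ g d v, l = g ++ d :: v ∧ IsFirstReturn f b (f b) g d := by
  refine (hf.staysIn_activePos_or_exists (hf.head_mem_activePos h.nonneg_head) l).resolve_left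
    fun hstay => ?_
  obtain ⟨i, hi⟩ := Function.ne_iff.1 (hf.ne_zero b)
  have hzero : f b i + walk f l i = 0 := by simpa using congrFun h.2 i
  exact (hstay.end_mem i hi).ne' hzero

lemma IsFirstReturn.exists_coordinate (hf : IsCoherentStep f) (hb : 0 ≤ f b)
    (h : IsFirstReturn f b (f b) g d) : ∃ i, f b i = 1 ∧ walk f g i = 0 ∧ f d i = -1 := by
  obtain ⟨hg, i, hi, hret⟩ := h
  have := hg.end_mem i hi
  have := hf.neg_one_le d i
  have := hf.eq_one_of_nonneg hb hi
  simp only [Pi.add_apply] at *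
  exact ⟨i, by omega, by omega, by omega⟩

lemma IsFirstReturn.staysIn_of_isExcursion (hf : IsCoherentStep f)
    (h : IsFirstReturn f b (f b) g d) (hw : IsExcursion f (b :: (g ++ d :: v))) :
    StaysIn f (Set.Ici 0) 0 g := fun p hp i => by
  have hnonneg := (staysIn_append.1 (staysIn_cons.1 hw.1).2).1 p hp i
  by_cases hi : f b i = 0
  · simpa [hi] using hnonneg
  · have := h.1 p hp i hi
    have := hf.eq_one_of_nonneg hw.nonneg_head hi
    simp only [Pi.add_apply, Pi.zero_apply] at *
    omega

lemma IsExcursion.exchange (hf : IsCoherentStep f) (hw : IsExcursion f w) :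
    IsExcursion f (Kreweras.exchange f w) := by
  cases w with
  | nil => exact hw
  | cons b l =>
    obtain ⟨g, d, v, rfl, h⟩ := hw.exists_isFirstReturn hf
    obtain ⟨i, -, -, hd⟩ := h.exists_coordinate hf hw.nonneg_head
    have hd : f d ≤ 0 := hf.nonpos_of_neg (i := i) (by omega)
    have hg := h.staysIn_of_isExcursion hf hw
    rw [h.exchange_eq]
    obtain ⟨hstay, hzero⟩ := hw
    simp only [staysIn_cons, staysIn_append, walk_cons, walk_append, zero_add] at hstay hzero
    have hv : StaysIn f (Set.Ici 0) (walk f g + f b) v :=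
      hstay.2.2.2.mono_start (by rw [add_comm (f b)]; simpa using hd)
    have hend : walk f g + (f b + (walk f v + f d)) = 0 := by rw [← hzero]; abel
    refine ⟨?_, by simpa using hend⟩
    simp only [staysIn_append, staysIn_cons, staysIn_nil, zero_add, hv, hg, hv.end_mem, true_and]
    exact ⟨by simpa using hg.end_mem, by rw [← hend]; simp [add_assoc]⟩

lemma IsExcursion.iterate_exchange (hf : IsCoherentStep f) (hw : IsExcursion f w) (k : ℕ) :
    IsExcursion f ((Kreweras.exchange f)^[k] w) := by
  induction k with
  | zero => exact hw
  | succ k ih => rw [Function.iterate_succ_apply']; exact ih.exchange hf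

end Exchange

section Inverse

variable {α ι : Type*} {f : α → ι → ℤ} {b d : α} {g v w : List α}

lemma IsFirstReturn.reverse (hf : IsCoherentStep f) (h : IsFirstReturn f b (f b) g d)
    (hw : IsExcursion f (b :: (g ++ d :: v))) :
    IsFirstReturn (-f) d (-f d) v.reverse b := by
  obtain ⟨i, hbi, hgi, hdi⟩ := h.exists_coordinate hf hw.nonneg_head
  have hzero := hw.2
  simp only [walk_cons, walk_append] at hzero
  refine ⟨fun p hp j hj => ?_, i, by simp [hdi], ?_⟩
  · obtain ⟨u, hu⟩ : p.reverse <:+ v := by simpa using List.reverse_suffix.2 hp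
    have hnonneg := hw.1 (b :: (g ++ d :: u)) ⟨p.reverse, by simp [hu]⟩ j
    have hdj := (hf.neg.eq_one_of_nonneg (neg_nonneg.2 (hf.nonpos_of_neg (i := i) (by omega))) hj)
    have hzero := congrFun hzero j
    simp only [← hu, walk_append, walk_reverse, walk_cons, walk_neg, Pi.add_apply, Pi.neg_apply,
      Pi.zero_apply] at *
    omega
  · have hzero := congrFun hzero i
    simp only [walk_reverse, walk_neg, Pi.add_apply, Pi.neg_apply, Pi.zero_apply] at *
    omega

lemma IsExcursion.exchange_neg_reverse_exchange (hf : IsCoherentStep f) (hw : IsExcursion f w) :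
    Kreweras.exchange (-f) (Kreweras.exchange f w).reverse = w.reverse := by
  cases w with
  | nil => rfl
  | cons b l =>
    obtain ⟨g, d, v, rfl, h⟩ := hw.exists_isFirstReturn hf
    have hrev := (h.reverse hf hw).exchange_eq g.reverse
    simpa [h.exchange_eq] using hrev

lemma IsExcursion.iterate_exchange_neg_reverse (hf : IsCoherentStep f) (hw : IsExcursion f w)
    (k : ℕ) :
    (Kreweras.exchange (-f))^[k] ((Kreweras.exchange f)^[k] w).reverse = w.reverse := by
  induction k with
  | zero => rfl
  | succ k ih =>
    rw [Function.iterate_succ_apply, Function.iterate_succ_apply' (Kreweras.exchange f),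
      (hw.iterate_exchange hf k).exchange_neg_reverse_exchange hf, ih]

lemma IsExcursion.eq_of_iterate_exchange_eq (hf : IsCoherentStep f) {w' : List α}
    (hw : IsExcursion f w) (hw' : IsExcursion f w') {k : ℕ}
    (h : (Kreweras.exchange f)^[k] w = (Kreweras.exchange f)^[k] w') : w = w' := by
  rw [← List.reverse_inj, ← hw.iterate_exchange_neg_reverse hf k, h,
    hw'.iterate_exchange_neg_reverse hf k]

end Inverse

section Transport

variable {α ι : Type*} (f : α → ι → ℤ)

/-- Puts `b` in place of the first letter at which the `i`-th coordinate of the walk, started at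
height `h`, vanishes. -/
def raise (i : ι) (b : α) : ℤ → List α → List α
  | _, [] => []
  | h, a :: l => if h + f a i = 0 then b :: l else a :: raise i b (h + f a i) l

/-- Puts `b` in place of each letter at which the `i`-th coordinate of the walk, started at height
`m`, reaches one of the heights `m - 1, …, 0` for the first time, provided that it does not become
negative. -/
def raiseAll (i : ι) (b : α) : ℕ → List α → List α
  | 0, l => l
  | m + 1, l => raiseAll i b m (raise f i b (m + 1) l)

/-- Started at height `m` on the `i`-th axis, the walk read off from `l` stays in the orthant and
its `i`-th coordinate reaches zero. -/
structure HasDepth [DecidableEq ι] (i : ι) (m : ℕ) (l : List α) : Prop where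
  staysIn : StaysIn f (Set.Ici 0) (Pi.single i (m : ℤ)) l
  exists_prefix : ∃ p, p <+: l ∧ m + walk f p i = 0

variable {f} {i : ι} {a b d : α} {m : ℕ} {g p l v M N : List α} {x : ι → ℤ}

lemma length_raise (i : ι) (b : α) (h : ℤ) (l : List α) :
    (raise f i b h l).length = l.length := by
  induction l generalizing h with
  | nil => rfl
  | cons a l ih => rw [raise]; split_ifs <;> simp [ih]

lemma length_raiseAll (i : ι) (b : α) (m : ℕ) (l : List α) :
    (raiseAll f i b m l).length = l.length := by
  induction m generalizing l with
  | zero => rfl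
  | succ m ih => rw [raiseAll, ih, length_raise]

lemma raise_append_cons {h : ℤ} (hg : ∀ p, p <+: g → 0 < h + walk f p i)
    (hd : h + walk f g i + f d i = 0) (v : List α) :
    raise f i b h (g ++ d :: v) = g ++ b :: v := by
  induction g generalizing h with
  | nil => simp [raise, show h + f d i = 0 by simpa using hd]
  | cons a g ih =>
    have hne : h + f a i ≠ 0 := ne_of_gt (by simpa using hg [a] (by simp))
    rw [List.cons_append, raise, if_neg hne, ih _ (by simpa [add_assoc] using hd), List.cons_append]
    exact fun p hp => by simpa [add_assoc] using hg (a :: p) (by simpa using hp)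

lemma exists_first_passage (hf : ∀ a, -1 ≤ f a i) (hx : 0 < x i) (hp : p <+: l)
    (hpx : x i + walk f p i ≤ 0) :
    ∃ g d v, l = g ++ d :: v ∧ StaysIn f {y | 0 < y i} x g ∧ x i + walk f g i = 1 ∧
      f d i = -1 := by
  induction l generalizing x p with
  | nil =>
    obtain rfl := List.prefix_nil.1 hp
    simp only [walk_nil, Pi.zero_apply] at hpx
    omega
  | cons a l ih =>
    have ha := hf a
    by_cases hxa : 0 < (x + f a) i
    · rcases List.prefix_cons_iff.1 hp with rfl | ⟨q, rfl, hq⟩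
      · simp only [walk_nil, Pi.zero_apply] at hpx
        omega
      · obtain ⟨g, d, v, rfl, hg, hgi, hd⟩ := ih hxa hq (by simpa [add_assoc] using hpx)
        exact ⟨a :: g, d, v, rfl, by simp [hg, hx], by simpa [add_assoc] using hgi, hd⟩
    · simp only [Pi.add_apply] at hxa
      exact ⟨[], a, l, rfl, by simpa using hx, by simp; omega, by omega⟩

variable [DecidableEq ι]

lemma StaysIn.hasDepth (hl : StaysIn f (Set.Ici 0) (Pi.single i (m : ℤ)) l)
    (hzero : Pi.single i (m : ℤ) + walk f l = 0) : HasDepth f i m l :=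
  ⟨hl, l, List.prefix_rfl, by simpa using congrFun hzero i⟩

lemma HasDepth.append (hg : HasDepth f i m g)
    (hl : StaysIn f (Set.Ici 0) (Pi.single i (m : ℤ) + walk f g) l) : HasDepth f i m (g ++ l) := by
  obtain ⟨p, hp, hpi⟩ := hg.exists_prefix
  exact ⟨staysIn_append.2 ⟨hg.staysIn, hl⟩, p, hp.trans (List.prefix_append g l), hpi⟩

lemma HasDepth.le (hM : HasDepth f i m M) (h : StaysIn f (Set.Ici 0) x M) : m ≤ x i := by
  obtain ⟨p, hp, hpi⟩ := hM.exists_prefix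
  have := h p hp i
  simp only [Pi.add_apply, Pi.zero_apply] at this
  omega

lemma HasDepth.exists_eq_append (hf : IsCoherentStep f) (hM : HasDepth f i (m + 1) M) :
    ∃ g d v, M = g ++ d :: v ∧ HasDepth f i m g ∧ walk f g i = -m ∧ f d i = -1 := by
  obtain ⟨p, hp, hpi⟩ := hM.exists_prefix
  obtain ⟨g, d, v, rfl, hg, hgi, hd⟩ :=
    exists_first_passage (x := Pi.single i ((m + 1 : ℕ) : ℤ)) (hf.neg_one_le · i)
      (by rw [Pi.single_eq_same]; omega) hp (by simpa using hpi.le)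
  have hgi : walk f g i = -m := by rw [Pi.single_eq_same] at hgi; omega
  refine ⟨g, d, v, rfl, ⟨fun q hq j => ?_, g, List.prefix_rfl, by omega⟩, hgi, hd⟩
  rcases eq_or_ne j i with rfl | hj
  · have := hg q hq
    simp only [Set.mem_ofPred_eq, Pi.add_apply, Pi.single_eq_same, Pi.zero_apply] at this ⊢
    omega
  · simpa [hj] using (staysIn_append.1 hM.staysIn).1 q hq j

lemma HasDepth.raise_append_cons (hg : HasDepth f i m g) (hgi : walk f g i = -m)
    (hd : f d i = -1) (v : List α) :
    raise f i b (m + 1) (g ++ d :: v) = g ++ b :: v := by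
  refine Kreweras.raise_append_cons (fun p hp => ?_) (by omega) v
  have := hg.staysIn p hp i
  simp only [Pi.add_apply, Pi.single_eq_same, Pi.zero_apply] at this
  omega

lemma HasDepth.raise (hf : IsCoherentStep f) (hb : f b i = 1) (hM : HasDepth f i (m + 1) M) :
    HasDepth f i m (raise f i b (m + 1) M) := by
  obtain ⟨g, d, v, rfl, hg, hgi, hd⟩ := hM.exists_eq_append hf
  rw [hg.raise_append_cons hgi hd]
  have hd_nonpos : f d ≤ 0 := hf.nonpos_of_neg (i := i) (by omega)
  have hb_nonneg : 0 ≤ f b := hf.nonneg_of_pos (i := i) (by omega)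
  have hv := (staysIn_cons.1 (staysIn_append.1 hM.staysIn).2).2
  refine hg.append (staysIn_cons.2 ⟨hg.staysIn.end_mem, hv.mono_start fun j => ?_⟩)
  have := hd_nonpos j
  have := hb_nonneg j
  rcases eq_or_ne j i with rfl | hj
  · simp [hb, hd, hgi]
  · simp only [Pi.add_apply, Pi.single_eq_of_ne hj, Pi.zero_apply] at *
    omega

lemma HasDepth.walk_raise (hf : IsCoherentStep f) (hd : f d i = -1)
    (hM : HasDepth f i (m + 1) M) :
    walk f (Kreweras.raise f i b (m + 1) M) = walk f M - f d + f b := by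
  obtain ⟨g, d', v, rfl, hg, hgi, hd'⟩ := hM.exists_eq_append hf
  obtain rfl : d' = d := hf.eq_of_apply_eq (i := i) (by omega) (by omega)
  rw [hg.raise_append_cons hgi hd']
  simp only [walk_append, walk_cons]
  abel

lemma HasDepth.staysIn_activePos (hM : HasDepth f i m M) (hx : x ∈ activePos f a)
    (hi : f a i = 0 ∨ m < x i) : StaysIn f (activePos f a) x M := fun p hp j hj => by
  have hnonneg := hM.staysIn p hp j
  have := hx j hj
  rcases eq_or_ne j i with rfl | hji
  · simp only [Pi.add_apply, Pi.single_eq_same, Pi.zero_apply] at hnonneg ⊢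
    omega
  · simp only [Pi.add_apply, Pi.single_eq_of_ne hji, Pi.zero_apply] at hnonneg ⊢
    omega

lemma HasDepth.exchangeFrom_append (hf : IsCoherentStep f) (hb : f b i = 1) (hd : f d i = -1)
    (hM : HasDepth f i (m + 1) M) (hx : x ∈ activePos f b) (hxi : x i = m + 1) (l : List α) :
    exchangeFrom f b x (M ++ l) = Kreweras.raise f i b (m + 1) M ++ (l ++ [d]) := by
  obtain ⟨g, d', v, rfl, hg, hgi, hd'⟩ := hM.exists_eq_append hf
  obtain rfl : d' = d := hf.eq_of_apply_eq (i := i) (by omega) (by omega)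
  have hret : IsFirstReturn f b x g d' :=
    ⟨hg.staysIn_activePos hx (by omega), i, by omega, by omega⟩
  simpa [hg.raise_append_cons hgi hd'] using hret.exchangeFrom_eq (v ++ l)

lemma HasDepth.exists_exchangeFrom_append (hf : IsCoherentStep f) (hb : f b i = 1) (ha : 0 ≤ f a)
    (hM : HasDepth f i m M) (hN : HasDepth f i m N) (hMN : walk f M = walk f N)
    (hx : x ∈ activePos f a) (hxm : m ≤ x i) (l : List α) :
    ∃ k M' N' l', exchangeFrom f a x (M ++ l) = M' ++ l' ∧ exchangeFrom f a x (N ++ l) = N' ++ l' ∧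
      HasDepth f i k M' ∧ HasDepth f i k N' ∧ walk f M' = walk f N' ∧
      raiseAll f i b k M' = raiseAll f i b m M ∧ raiseAll f i b k N' = raiseAll f i b m N := by
  by_cases hi : f a i = 0 ∨ m < x i
  · exact ⟨m, M, N, _, Kreweras.exchangeFrom_append (hM.staysIn_activePos hx hi) l,
      hMN ▸ Kreweras.exchangeFrom_append (hN.staysIn_activePos hx hi) l, hM, hN, hMN, rfl, rfl⟩
  · push Not at hi
    obtain rfl : a = b := hf.eq_of_apply_eq hi.1 (by rw [hb, hf.eq_one_of_nonneg ha hi.1])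
    have hxi := hx i hi.1
    obtain ⟨k, rfl⟩ := Nat.exists_eq_succ_of_ne_zero (n := m) (by omega)
    obtain ⟨-, d, -, -, -, -, hd⟩ := hM.exists_eq_append hf
    have hxi : x i = k + 1 := by omega
    exact ⟨k, _, _, _, hM.exchangeFrom_append hf hb hd hx hxi l,
      hN.exchangeFrom_append hf hb hd hx hxi l, hM.raise hf hb, hN.raise hf hb,
      by rw [hM.walk_raise hf hd, hN.walk_raise hf hd, hMN], rfl, rfl⟩

/-- The letters of `M` that change are the same for every prefix `p`, and the new tail sees `M`
only through its displacement. -/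
theorem iterate_exchange_eq_raiseAll_append (hf : IsCoherentStep f) (hb : f b i = 1)
    (hM : HasDepth f i m M) (hN : HasDepth f i m N) (hMN : walk f M = walk f N)
    (h : IsExcursion f (p ++ (M ++ l))) :
    ∃ t, (exchange f)^[p.length] (p ++ (M ++ l)) = raiseAll f i b m M ++ t ∧
      (exchange f)^[p.length] (p ++ (N ++ l)) = raiseAll f i b m N ++ t := by
  induction hk : p.length generalizing p m M N l with
  | zero =>
    obtain rfl := List.length_eq_zero_iff.1 hk
    have hm := hM.le ((staysIn_append (l := M)).1 h.1).1
    obtain rfl : m = 0 := by simpa using hm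
    exact ⟨l, rfl, rfl⟩
  | succ k ih =>
    obtain ⟨a, p, rfl⟩ := List.exists_cons_of_length_eq_add_one hk
    have hk : p.length = k := by simpa using hk
    have ha : 0 ≤ f a := h.nonneg_head
    have hT := h.exchange hf
    simp only [Function.iterate_succ_apply]
    rcases hf.staysIn_activePos_or_exists (hf.head_mem_activePos ha) p with
      hp | ⟨g, d, v, rfl, hret⟩
    · have hMl := (staysIn_append.1 (staysIn_append.1 (staysIn_cons.1 h.1).2).2).1
      obtain ⟨m', M', N', l', hTM, hTN, hM', hN', hMN', hrM, hrN⟩ :=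
        hM.exists_exchangeFrom_append hf hb ha hN hMN hp.end_mem (hM.le (by simpa using hMl)) l
      simp only [List.cons_append, exchange, Kreweras.exchangeFrom_append hp, hTM, hTN] at hT ⊢
      rw [← hrM, ← hrN]
      exact ih hM' hN' hMN' hT hk
    · have hTM := hret.exchange_eq (v ++ (M ++ l))
      have hTN := hret.exchange_eq (v ++ (N ++ l))
      simp only [List.cons_append, List.append_assoc] at hTM hTN hT ⊢
      rw [hTM] at hT ⊢
      rw [hTN]
      simpa using ih (p := g ++ a :: v) (l := l ++ [d]) hM hN hMN (by simpa using hT)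
        (by simpa using hk)

/-- What happens to `M` behind `p` can be read off from the behaviour of a second word `N` behind
`p` and from the behaviour of `N` behind a reference prefix `q`. -/
theorem exists_iterate_exchange_append {q N' q' : List α} (hf : IsCoherentStep f) (hb : f b i = 1)
    (hM : HasDepth f i m M) (hN : HasDepth f i m N) (hMN : walk f M = walk f N)
    (href : (exchange f)^[q.length] (q ++ N) = N' ++ q') (hN' : N'.length = N.length)
    (hp : IsExcursion f (p ++ M)) (hq : IsExcursion f (q ++ M)) :
    ∃ V t, (exchange f)^[p.length] (p ++ M) = V ++ t ∧
      (exchange f)^[p.length] (p ++ N) = N' ++ t ∧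
      (exchange f)^[q.length] (q ++ M) = V ++ q' := by
  obtain ⟨t, hpM, hpN⟩ :=
    iterate_exchange_eq_raiseAll_append (p := p) (l := []) hf hb hM hN hMN (by simpa)
  obtain ⟨s, hqM, hqN⟩ :=
    iterate_exchange_eq_raiseAll_append (p := q) (l := []) hf hb hM hN hMN (by simpa)
  simp only [List.append_nil] at hpM hpN hqM hqN
  obtain ⟨rfl, rfl⟩ : N' = raiseAll f i b m N ∧ q' = s :=
    List.append_inj (href ▸ hqN) (by rw [hN', length_raiseAll])
  exact ⟨_, t, hpM, hpN, hqM⟩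

end Transport

section Letters

/-- The steps of the walk of a Kreweras word: the coordinate indexed by a letter `c` records the
number of `A`'s minus the number of `c`'s, so the coordinate indexed by `A` is identically zero. -/
def step (a c : KLetter) : ℤ :=
  (if a = A then 1 else 0) - (if a = c then 1 else 0)

variable {n e : ℕ} {c : KLetter} {g u v w : List KLetter}

lemma walk_step (l : List KLetter) (c : KLetter) : walk step l c = l.count A - l.count c := by
  induction l with
  | nil => simp
  | cons a l ih =>
    simp only [walk_cons, Pi.add_apply, step, ih, List.count_cons, beq_iff_eq]
    push_cast
    ring

lemma isCoherentStep_step : IsCoherentStep step where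
  abs_le_one a i := by cases a <;> cases i <;> decide
  nonneg_or_nonpos a := by
    cases a
    · exact .inl fun i => by cases i <;> decide
    all_goals exact .inr fun i => by cases i <;> decide
  ne_zero a h := by
    have hB := congrFun h B
    have hC := congrFun h C
    cases a <;> simp [step] at hB hC
  eq_of_apply_eq {a b i} h₀ h := by cases a <;> cases b <;> cases i <;> simp_all [step]

lemma length_eq_count (l : List KLetter) : l.length = l.count A + l.count B + l.count C := by
  induction l with
  | nil => rfl
  | cons a l ih => cases a <;> simp [ih] <;> omega

lemma isKrewerasWord_iff : IsKrewerasWord n w ↔ IsExcursion step w ∧ w.length = 3 * n := by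
  have hlen := length_eq_count w
  constructor
  · rintro ⟨hw, hA, hB, -, hpre⟩
    refine ⟨⟨fun p hp x => ?_, funext fun x => ?_⟩, hw⟩
    · rw [List.prefix_iff_eq_take.1 hp]
      have := hpre p.length
      cases x <;> simp [walk_step] <;> omega
    · cases x <;> simp [walk_step] <;> omega
  · rintro ⟨⟨hstay, hzero⟩, hw⟩
    have hB := congrFun hzero B
    have hC := congrFun hzero C
    simp only [walk_step, Pi.zero_apply] at hB hC
    refine ⟨hw, by omega, by omega, by omega, fun k => ?_⟩
    have hpre := hstay _ (List.take_prefix k w)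
    have hB := hpre B
    have hC := hpre C
    simp only [walk_step, Pi.add_apply, Pi.zero_apply] at hB hC
    omega

lemma negL_involutive : Function.Involutive negL := fun a => by cases a <;> rfl

lemma negL_ne_A (hc : c ≠ A) : negL c ≠ A := by
  cases c <;> simp_all [negL]

lemma negL_ne_self (hc : c ≠ A) : negL c ≠ c := by
  cases c <;> simp_all [negL]

lemma step_negL (a i : KLetter) : step (negL a) i = step a (negL i) := by
  cases a <;> cases i <;> rfl

lemma exchange_step_map_negL (w : List KLetter) :
    exchange step (w.map negL) = (exchange step w).map negL :=
  exchange_map negL_involutive.surjective step_negL w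

lemma iterate_exchange_step_map_negL (k : ℕ) (w : List KLetter) :
    (exchange step)^[k] (w.map negL) = ((exchange step)^[k] w).map negL :=
  (Function.Semiconj.iterate_right (f := List.map negL)
    (fun w => (exchange_step_map_negL w).symm) k w).symm

lemma IsExcursion.map_negL (hw : IsExcursion step w) : IsExcursion step (w.map negL) :=
  hw.map step_negL

lemma nsmul_step (hc : c ≠ A) (e : ℕ) : e • step c = -Pi.single c (e : ℤ) := by
  ext i
  cases c <;> cases i <;> simp_all [step]

lemma nsmul_step_A_add (hc : c ≠ A) (e : ℕ) :
    e • step A + e • step (negL c) = Pi.single c (e : ℤ) := by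
  ext i
  cases c <;> cases i <;> simp_all [step, negL]

lemma step_A_nonneg : 0 ≤ step A := fun i => by
  cases i <;> decide

lemma step_nonpos (hc : c ≠ A) : step c ≤ 0 := fun i => by
  cases c <;> cases i <;> simp_all [step]

lemma isExcursion_append_replicate (hc : c ≠ A) : IsExcursion step (u ++ List.replicate e c) ↔
    StaysIn step (Set.Ici 0) 0 u ∧ walk step u = Pi.single c (e : ℤ) := by
  rw [isExcursion_append, walk_replicate, nsmul_step hc, add_neg_eq_zero]
  refine and_congr_right fun _ => ⟨fun h => h.2, fun h => ⟨?_, h⟩⟩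
  rw [staysIn_replicate, nsmul_step hc, h]
  simp

lemma isExcursion_replicate_append (hc : c ≠ A) :
    IsExcursion step (List.replicate e A ++ (List.replicate e (negL c) ++ v)) ↔
      StaysIn step (Set.Ici 0) (Pi.single c (e : ℤ)) v ∧ Pi.single c (e : ℤ) + walk step v = 0 := by
  have hA : 0 ≤ e • step A := nsmul_nonneg step_A_nonneg e
  simp only [IsExcursion, staysIn_append, staysIn_replicate, walk_append, walk_replicate,
    zero_add, le_refl, hA, nsmul_step_A_add hc, ← add_assoc, true_and]
  simp

lemma exchange_step_A_cons (hc : c ≠ A) (hg : StaysIn step (Set.Ici 0) 0 g)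
    (hgc : walk step g c = 0) (v : List KLetter) :
    exchange step (A :: (g ++ c :: v)) = g ++ A :: (v ++ [c]) := by
  refine IsFirstReturn.exchange_eq ⟨?_, c, ?_⟩ v
  · have hA : StaysIn step (activePos step A) (0 + step A) g :=
      hg.translate fun y hy i hi => by
        have := hy i
        cases i <;> simp_all [step]
    simpa using hA
  · cases c <;> simp_all [step]

lemma iterate_exchange_step_replicate (hc : c ≠ A) (e : ℕ) (v : List KLetter) :
    (exchange step)^[e] (List.replicate e A ++ (List.replicate e c ++ v)) =
      List.replicate e A ++ (v ++ List.replicate e c) := by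
  induction e generalizing v with
  | zero => simp
  | succ e ih =>
    have hwalk : e • step A + e • step c = Pi.single (negL c) (e : ℤ) := by
      simpa [negL_involutive c] using nsmul_step_A_add (negL_ne_A hc) e
    have hstay : StaysIn step (Set.Ici 0) 0 (List.replicate e A ++ List.replicate e c) := by
      simp [-nsmul_eq_mul, staysIn_append, staysIn_replicate, hwalk, nsmul_nonneg step_A_nonneg e]
    have hgc : walk step (List.replicate e A ++ List.replicate e c) c = 0 := by
      rw [walk_append, walk_replicate, walk_replicate, hwalk,
        Pi.single_eq_of_ne (negL_ne_self hc).symm]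
    have hT := exchange_step_A_cons hc hstay hgc v
    calc (exchange step)^[e + 1] (List.replicate (e + 1) A ++ (List.replicate (e + 1) c ++ v))
      _ = (exchange step)^[e]
          (exchange step (A :: ((List.replicate e A ++ List.replicate e c) ++ c :: v))) := by
        simp [List.replicate_succ (a := A), List.replicate_succ' (a := c)]
      _ = (exchange step)^[e]
          (List.replicate e A ++ (List.replicate e c ++ A :: (v ++ [c]))) := by
        rw [hT, List.append_assoc]
      _ = List.replicate e A ++ (A :: (v ++ [c]) ++ List.replicate e c) := ih _
      _ = List.replicate (e + 1) A ++ (v ++ List.replicate (e + 1) c) := by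
        simp [List.replicate_succ' (a := A), List.replicate_succ (a := c)]

end Letters

section Gluing

variable {e k m : ℕ} {c : KLetter} {u v w : List KLetter}

/-- The words of closed walks in the orthant that promotion, iterated as often as the word has
letters, turns into their image under the exchange of `B` and `C`. -/
structure IsAntiperiodic (w : List KLetter) : Prop where
  isExcursion : IsExcursion step w
  iterate_exchange : (exchange step)^[w.length] w = w.map negL

/-- Meeting in the middle: `w` is promoted `k` times, and its expected image is promoted backwards
`m` times. -/
lemma IsExcursion.isAntiperiodic_iff (hw : IsExcursion step w) (hkm : k + m = w.length) :
    IsAntiperiodic w ↔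
      (Kreweras.exchange (-step))^[m] (w.map negL).reverse =
        ((Kreweras.exchange step)^[k] w).reverse := by
  have hf := isCoherentStep_step
  constructor
  · intro h
    have hT := h.iterate_exchange
    rw [← hkm, add_comm, Function.iterate_add_apply] at hT
    rw [← hT, (hw.iterate_exchange hf k).iterate_exchange_neg_reverse hf]
  · intro h
    have hS := hw.map_negL.reverse.iterate_exchange_neg_reverse hf.neg m
    rw [h, neg_neg, List.reverse_reverse, List.reverse_reverse, ← Function.iterate_add_apply,
      add_comm, hkm] at hS
    exact ⟨hw, hS⟩

lemma IsExcursion.isAntiperiodic_iterate_exchange_iff (hw : IsExcursion step w) (k : ℕ) :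
    IsAntiperiodic ((Kreweras.exchange step)^[k] w) ↔ IsAntiperiodic w := by
  have hf := isCoherentStep_step
  have hcomm : (Kreweras.exchange step)^[((Kreweras.exchange step)^[k] w).length]
      ((Kreweras.exchange step)^[k] w) =
      (Kreweras.exchange step)^[k] ((Kreweras.exchange step)^[w.length] w) := by
    rw [length_iterate_exchange, ← Function.iterate_add_apply, ← Function.iterate_add_apply,
      add_comm]
  refine ⟨fun h => ⟨hw, ?_⟩, fun h => ⟨hw.iterate_exchange hf k, ?_⟩⟩
  · refine (hw.iterate_exchange hf _).eq_of_iterate_exchange_eq hf hw.map_negL (k := k) ?_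
    rw [← hcomm, h.iterate_exchange, iterate_exchange_step_map_negL]
  · rw [hcomm, h.iterate_exchange, iterate_exchange_step_map_negL]

lemma isExcursion_replicate (hc : c ≠ A) (e : ℕ) : IsExcursion step
    (List.replicate e A ++ (List.replicate e (negL c) ++ List.replicate e c)) := by
  rw [isExcursion_replicate_append hc, staysIn_replicate, walk_replicate, nsmul_step hc]
  simp

lemma iterate_exchange_step_replicate_replicate (hc : c ≠ A) (e : ℕ) :
    (exchange step)^[2 * e]
      (List.replicate e A ++ (List.replicate e (negL c) ++ List.replicate e c)) =
      List.replicate e A ++ (List.replicate e (negL c) ++ List.replicate e c) := by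
  rw [two_mul, Function.iterate_add_apply, iterate_exchange_step_replicate (negL_ne_A hc),
    iterate_exchange_step_replicate hc]

lemma isAntiperiodic_replicate (hc : c ≠ A) (e : ℕ) : IsAntiperiodic
    (List.replicate e A ++ (List.replicate e (negL c) ++ List.replicate e c)) := by
  refine ⟨isExcursion_replicate hc e, ?_⟩
  have hlen : (List.replicate e A ++ (List.replicate e (negL c) ++ List.replicate e c)).length =
      e + 2 * e := by simp; omega
  rw [hlen, Function.iterate_add_apply, iterate_exchange_step_replicate_replicate hc,
    iterate_exchange_step_replicate (negL_ne_A hc)]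
  simp [negL_involutive c, show negL A = A from rfl]

lemma iterate_exchange_neg_step_replicate (hc : c ≠ A) (e : ℕ) :
    (exchange (-step))^[e]
      (List.replicate e (negL c) ++ (List.replicate e c ++ List.replicate e A)) =
      List.replicate e c ++ (List.replicate e (negL c) ++ List.replicate e A) := by
  have h := (isExcursion_replicate hc e).iterate_exchange_neg_reverse isCoherentStep_step e
  rw [iterate_exchange_step_replicate (negL_ne_A hc)] at h
  simpa using h

lemma exists_iterate_exchange_step_append (hc : c ≠ A)
    (hu : IsExcursion step (u ++ List.replicate e c))
    (hv : IsExcursion step (List.replicate e A ++ (List.replicate e (negL c) ++ v))) :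
    ∃ V t, (exchange step)^[u.length] (u ++ v) = V ++ t ∧
      (exchange step)^[u.length] (u ++ List.replicate e c) = List.replicate e A ++ t ∧
      (exchange step)^[2 * e] (List.replicate e A ++ (List.replicate e (negL c) ++ v)) =
        V ++ (List.replicate e (negL c) ++ List.replicate e c) := by
  obtain ⟨hu₀, hwu⟩ := (isExcursion_append_replicate hc).1 hu
  obtain ⟨hv₀, hwv⟩ := (isExcursion_replicate_append hc).1 hv
  have hwe : Pi.single c (e : ℤ) + walk step (List.replicate e c) = 0 := by
    rw [walk_replicate, nsmul_step hc, add_neg_cancel]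
  have hve : StaysIn step (Set.Ici 0) (Pi.single c (e : ℤ)) (List.replicate e c) :=
    (hwu ▸ ((isExcursion_append.1 hu).2.1 : _))
  have hlen : (List.replicate e A ++ List.replicate e (negL c)).length = 2 * e := by
    simp [two_mul]
  have hA : step A c = 1 := by cases c <;> simp_all [step]
  have h := exists_iterate_exchange_append (p := u)
    (q := List.replicate e A ++ List.replicate e (negL c)) (N' := List.replicate e A)
    isCoherentStep_step hA (hv₀.hasDepth hwv) (hve.hasDepth hwe)
    (add_left_cancel (hwv.trans hwe.symm))
    (by rw [hlen, List.append_assoc, iterate_exchange_step_replicate_replicate hc]) (by simp)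
    (isExcursion_append.2 ⟨hu₀, hwu ▸ hv₀, hwu ▸ hwv⟩) (by simpa using hv)
  rwa [hlen, List.append_assoc] at h

lemma walk_step_map_negL (hwu : walk step u = Pi.single c (e : ℤ)) :
    walk step (u.map negL) = Pi.single (negL c) (e : ℤ) := by
  ext i
  cases c <;> cases i <;> simp [walk_map step step_negL, hwu, negL]

lemma exists_iterate_exchange_neg_step_append (hc : c ≠ A)
    (hu : IsExcursion step (u ++ List.replicate e c))
    (hv : IsExcursion step (List.replicate e A ++ (List.replicate e (negL c) ++ v))) :
    ∃ W s,
      (exchange (-step))^[v.length] ((v.map negL).reverse ++ (u.map negL).reverse) = W ++ s ∧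
      (exchange (-step))^[v.length]
          ((v.map negL).reverse ++ (List.replicate e c ++ List.replicate e A)) =
        List.replicate e c ++ List.replicate e (negL c) ++ s ∧
      (exchange (-step))^[e] (List.replicate e (negL c) ++ (u.map negL).reverse) =
        W ++ List.replicate e A := by
  obtain ⟨hu₀, hwu⟩ := (isExcursion_append_replicate hc).1 hu
  obtain ⟨hv₀, hwv⟩ := (isExcursion_replicate_append hc).1 hv
  have hwM := walk_step_map_negL hwu
  have hM : HasDepth (-step) (negL c) e (u.map negL).reverse := by
    refine StaysIn.hasDepth ?_ (by rw [walk_neg, walk_reverse, hwM, add_neg_cancel])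
    simpa [hwM] using (hu₀.map step_negL).reverse
  have hwN : Pi.single (negL c) (e : ℤ) +
      walk (-step) (List.replicate e c ++ List.replicate e A) = 0 := by
    rw [← nsmul_step_A_add (negL_ne_A hc), negL_involutive c]
    simp
  have hN : HasDepth (-step) (negL c) e (List.replicate e c ++ List.replicate e A) := by
    have h := (isExcursion_replicate (negL_ne_A hc) e).reverse
    rw [negL_involutive c, ← List.append_assoc, List.reverse_append, isExcursion_append] at h
    refine StaysIn.hasDepth ?_ hwN
    simpa [-nsmul_eq_mul, walk_neg, nsmul_step (negL_ne_A hc)] using h.2.1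
  have hp : IsExcursion (-step) ((v.map negL).reverse ++ (u.map negL).reverse) := by
    have huv : IsExcursion step (u ++ v) := isExcursion_append.2 ⟨hu₀, hwu ▸ hv₀, hwu ▸ hwv⟩
    simpa using huv.map_negL.reverse
  have hq : IsExcursion (-step) (List.replicate e (negL c) ++ (u.map negL).reverse) := by
    simpa using hu.map_negL.reverse
  have h := exists_iterate_exchange_append isCoherentStep_step.neg
    (q := List.replicate e (negL c)) (N' := List.replicate e c ++ List.replicate e (negL c))
    (show (-step) (negL c) (negL c) = 1 by cases c <;> simp_all [step, negL]) hM hN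
    (by rw [walk_neg, walk_reverse, hwM, ← add_eq_zero_iff_neg_eq.1 hwN])
    (by rw [List.length_replicate, iterate_exchange_neg_step_replicate hc, List.append_assoc])
    (by simp) hp hq
  simpa using h

theorem IsAntiperiodic.append_of_replicate (hc : c ≠ A)
    (hu : IsAntiperiodic (u ++ List.replicate e c))
    (hv : IsAntiperiodic (List.replicate e A ++ (List.replicate e (negL c) ++ v))) :
    IsAntiperiodic (u ++ v) := by
  obtain ⟨hu₀, hwu⟩ := (isExcursion_append_replicate hc).1 hu.isExcursion
  obtain ⟨hv₀, hwv⟩ := (isExcursion_replicate_append hc).1 hv.isExcursion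
  have huv : IsExcursion step (u ++ v) := isExcursion_append.2 ⟨hu₀, hwu ▸ hv₀, hwu ▸ hwv⟩
  obtain ⟨V, t, hTv, hTu, hTref⟩ :=
    exists_iterate_exchange_step_append hc hu.isExcursion hv.isExcursion
  obtain ⟨W, s, hSu, hSv, hSref⟩ :=
    exists_iterate_exchange_neg_step_append hc hu.isExcursion hv.isExcursion
  have hW : W = t.reverse := by
    have := (hu.isExcursion.isAntiperiodic_iff (k := u.length) (m := e) (by simp)).1 hu
    simpa [hTu, hSref] using this
  have hs : s = V.reverse := by
    have := (hv.isExcursion.isAntiperiodic_iff (k := 2 * e) (m := v.length)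
      (by simp; omega)).1 hv
    simpa [hTref, negL_involutive c, show negL A = A from rfl, hSv] using this
  refine (huv.isAntiperiodic_iff (k := u.length) (m := v.length) (by simp)).2 ?_
  rw [hTv, List.map_append, List.reverse_append, hSu, hW, hs, List.reverse_append]

end Gluing

section Antiperiodicity

variable {d k : ℕ} {c : KLetter} {g v w : List KLetter}

lemma walk_step_eq_single (hc : c ≠ A) (h : walk step g (negL c) = 0) :
    walk step g = Pi.single c (walk step g c) := by
  have hA : walk step g A = 0 := by simp [walk_step]
  ext i
  cases c <;> cases i <;> simp_all [negL]

lemma length_eq_sub_walk (hc : c ≠ A) (l : List KLetter) :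
    (l.length : ℤ) = 3 * l.count A - walk step l c - walk step l (negL c) := by
  rw [length_eq_count]
  cases c <;> simp_all [walk_step, negL] <;> ring

lemma neg_walk_le_length (l : List KLetter) (c : KLetter) : -walk step l c ≤ l.length := by
  have := List.count_le_length (a := c) (l := l)
  rw [walk_step]
  omega

lemma walk_le_count_A (l : List KLetter) (c : KLetter) : walk step l c ≤ l.count A := by
  rw [walk_step]
  omega

lemma isExcursion_cons_append_iff (hc : c ≠ A) (hg : StaysIn step (Set.Ici 0) 0 g)
    (hwg : walk step g = Pi.single c (d : ℤ)) :
    IsExcursion step (A :: (g ++ negL c :: v)) ↔ IsExcursion step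
      (List.replicate (d + 1) A ++ (List.replicate (d + 1) (negL c) ++ v)) := by
  have hA : step A + walk step g + step (negL c) = Pi.single c ((d + 1 : ℕ) : ℤ) := by
    have := nsmul_step_A_add hc 1
    rw [hwg, add_right_comm, ← one_nsmul (step A), ← one_nsmul (step (negL c)), this,
      ← Pi.single_add, add_comm, Nat.cast_add]
  have hg₁ : StaysIn step (Set.Ici 0) (step A) g := hg.mono_start step_A_nonneg
  have hend : 0 ≤ step A + walk step g := hg₁.end_mem
  rw [isExcursion_replicate_append hc, IsExcursion]
  simp [staysIn_append, hg₁, hA, hend, ← add_assoc]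

lemma IsAntiperiodic.cons_append_replicate (hc : c ≠ A)
    (h : IsAntiperiodic (g ++ List.replicate d c)) :
    IsAntiperiodic (A :: (g ++ negL c :: List.replicate (d + 1) c)) := by
  have hc' := negL_ne_A hc
  obtain ⟨hg, hwg⟩ := (isExcursion_append_replicate hc).1 h.isExcursion
  have hw : IsExcursion step (A :: (g ++ negL c :: List.replicate (d + 1) c)) :=
    (isExcursion_cons_append_iff hc hg hwg).2 (isExcursion_replicate hc _)
  have hT (l : List KLetter) (hl : StaysIn step (Set.Ici 0) 0 l)
      (hwl : walk step l = Pi.single c (d : ℤ)) :=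
    exchange_step_A_cons hc' hl (hwl ▸ Pi.single_eq_of_ne (negL_ne_self hc) _)
      (List.replicate (d + 1) c)
  obtain ⟨hs, hws⟩ := (isExcursion_append_replicate (e := d) hc).1
    (by simpa using isExcursion_replicate hc d :
      IsExcursion step ((List.replicate d A ++ List.replicate d (negL c)) ++ List.replicate d c))
  have hblock : IsAntiperiodic (List.replicate d A ++ (List.replicate d (negL c) ++
      A :: (List.replicate (d + 1) c ++ [negL c]))) := by
    have hword : List.replicate (d + 1) A ++
        (List.replicate (d + 1) (negL c) ++ List.replicate (d + 1) c) =
        A :: ((List.replicate d A ++ List.replicate d (negL c)) ++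
          negL c :: List.replicate (d + 1) c) := by
      simp [List.replicate_succ (a := A), List.replicate_succ' (a := negL c)]
    rw [← List.append_assoc, ← hT _ hs hws, ← hword, ← Function.iterate_one (exchange step)]
    exact (isExcursion_replicate hc _).isAntiperiodic_iterate_exchange_iff 1 |>.2
      (isAntiperiodic_replicate hc _)
  rw [← hw.isAntiperiodic_iterate_exchange_iff 1, Function.iterate_one, hT g hg hwg]
  exact h.append_of_replicate hc hblock

lemma IsAntiperiodic.cons_append_cons (hc : c ≠ A) (hg : IsAntiperiodic (g ++ List.replicate d c))
    (hv : IsAntiperiodic (List.replicate (d + 1) A ++ (List.replicate (d + 1) (negL c) ++ v))) :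
    IsAntiperiodic (A :: (g ++ negL c :: v)) := by
  have h : IsAntiperiodic ((A :: (g ++ [negL c])) ++ List.replicate (d + 1) c) := by
    simpa using hg.cons_append_replicate hc
  simpa using h.append_of_replicate hc hv

lemma IsExcursion.exists_append_of_replicate (hc : c ≠ A) (hw : IsExcursion step
    (List.replicate (k + 1) A ++ (List.replicate (k + 1) (negL c) ++ v))) :
    ∃ g v' d, v = g ++ c :: v' ∧ walk step g c = -k ∧ walk step g (negL c) = (d : ℕ) ∧
      IsExcursion step (List.replicate k A ++ g ++ List.replicate (k + d) (negL c)) ∧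
      IsExcursion step (List.replicate (k + d + 1) A ++ (List.replicate (k + d + 1)
        (negL (negL c)) ++ (v' ++ List.replicate (k + 1) (negL c)))) := by
  have hc' := negL_ne_A hc
  obtain ⟨hv₀, hwv⟩ := (isExcursion_replicate_append hc).1 hw
  obtain ⟨g, a, v', rfl, hg, hgc, ha⟩ := (hv₀.hasDepth hwv).exists_eq_append isCoherentStep_step
  obtain rfl : a = c := by cases a <;> cases c <;> simp_all [step]
  have hd := hg.staysIn.end_mem (negL a)
  simp only [Pi.add_apply, Pi.single_eq_of_ne (negL_ne_self hc), zero_add, Pi.zero_apply] at hd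
  obtain ⟨d, hd⟩ := Int.eq_ofNat_of_zero_le hd
  have hle : Pi.single a (k : ℤ) ≤ 0 + k • step A := by
    rw [← nsmul_step_A_add hc, nsmul_step hc', zero_add]
    exact add_le_of_nonpos_right (neg_nonpos.2 (Pi.single_nonneg.2 (Int.natCast_nonneg k)))
  have hstay : StaysIn step (Set.Ici 0) 0 (List.replicate k A ++ g) := by
    rw [staysIn_append, staysIn_replicate, walk_replicate, zero_add]
    exact ⟨⟨le_rfl, nsmul_nonneg step_A_nonneg k⟩, by simpa using hg.staysIn.mono_start hle⟩
  have hwalk : walk step (List.replicate k A ++ g) = Pi.single (negL a) ((k + d : ℕ) : ℤ) := by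
    have hA (i : KLetter) (hi : i ≠ A) : step A i = 1 := by simp [step, hi.symm]
    rw [walk_step_eq_single hc'] <;> simp [negL_involutive a, hgc, hd, hA _ hc, hA _ hc']
  refine ⟨g, v', d, rfl, hgc, hd, (isExcursion_append_replicate hc').2 ⟨hstay, hwalk⟩,
    (isExcursion_cons_append_iff hc' hstay hwalk).1 ?_⟩
  have h := hw.iterate_exchange isCoherentStep_step (k + 1)
  rw [iterate_exchange_step_replicate hc'] at h
  simpa [List.replicate_succ, negL_involutive a] using h

lemma IsAntiperiodic.replicate_append_cons (hc : c ≠ A)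
    (hg : IsAntiperiodic (List.replicate k A ++ g ++ List.replicate d (negL c)))
    (hv : IsAntiperiodic (List.replicate (d + 1) A ++
      (List.replicate (d + 1) (negL (negL c)) ++ (v ++ List.replicate (k + 1) (negL c)))))
    (hw : IsExcursion step (List.replicate (k + 1) A ++
      (List.replicate (k + 1) (negL c) ++ (g ++ c :: v)))) :
    IsAntiperiodic
      (List.replicate (k + 1) A ++ (List.replicate (k + 1) (negL c) ++ (g ++ c :: v))) := by
  have hT : (exchange step)^[k + 1] (List.replicate (k + 1) A ++
      (List.replicate (k + 1) (negL c) ++ (g ++ c :: v))) =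
      A :: (List.replicate k A ++ g ++ negL (negL c) ::
        (v ++ List.replicate (k + 1) (negL c))) := by
    rw [iterate_exchange_step_replicate (negL_ne_A hc), negL_involutive c]
    simp [List.replicate_succ]
  rw [← hw.isAntiperiodic_iterate_exchange_iff (k + 1), hT]
  exact hg.cons_append_cons (negL_ne_A hc) hv

lemma IsAntiperiodic.append (hv : IsAntiperiodic v) (hw : IsAntiperiodic w) :
    IsAntiperiodic (v ++ w) := by
  have h : IsAntiperiodic (v ++ List.replicate 0 B) := by simpa using hv
  exact h.append_of_replicate (by decide) (by simpa using hw)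

lemma eq_replicate_of_walk_step (hc : c ≠ A) (hA : g.count A = 0) (hgc : walk step g c = -k)
    (hg : walk step g (negL c) = 0) : g = List.replicate k c := by
  have hlen := length_eq_sub_walk hc g
  refine List.eq_replicate_iff.2 ⟨by omega, fun b hb => ?_⟩
  rw [walk_step, hA] at hg
  have hbA : b ≠ A := fun h => List.count_eq_zero.1 hA (h ▸ hb)
  have hbc : b ≠ negL c := fun h => List.count_eq_zero.1 (by omega) (h ▸ hb)
  cases b <;> cases c <;> simp_all [negL]

lemma isAntiperiodic_replicate_append (hc : c ≠ A) (hw : IsExcursion step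
      (List.replicate (k + 1) A ++ (List.replicate (k + 1) (negL c) ++ v)))
    (ih : ∀ w, w.length < 2 * (k + 1) + v.length → IsExcursion step w → IsAntiperiodic w) :
    IsAntiperiodic (List.replicate (k + 1) A ++ (List.replicate (k + 1) (negL c) ++ v)) := by
  induction hn : v.length using Nat.strong_induction_on generalizing c k v with
  | _ n ih_length =>
  subst hn
  have hc' := negL_ne_A hc
  obtain ⟨g, v', d, rfl, hgc, hgd, hu, hv⟩ := hw.exists_append_of_replicate hc
  have hlen := length_eq_sub_walk hc g
  have hdA := walk_le_count_A g (negL c)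
  have hdv : d ≤ v'.length := by
    have h := congrFun ((isExcursion_replicate_append hc').1 hv).2 (negL c)
    have := neg_walk_le_length (v' ++ List.replicate (k + 1) (negL c)) (negL c)
    simp only [Pi.add_apply, Pi.single_eq_same, Pi.zero_apply, List.length_append,
      List.length_replicate] at h this
    omega
  by_cases hdeg : d = 0 ∧ g.count A = 0
  · rw [eq_replicate_of_walk_step hc hdeg.2 hgc (by simpa [hdeg.1] using hgd)] at hw ih ⊢
    have hword : List.replicate (k + 1) A ++ (List.replicate (k + 1) (negL c) ++
        (List.replicate k c ++ c :: v')) = (List.replicate (k + 1) A ++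
        (List.replicate (k + 1) (negL c) ++ List.replicate (k + 1) c)) ++ v' := by
      simp [List.replicate_succ' (a := c)]
    have hblock := isAntiperiodic_replicate hc (k + 1)
    rw [hword, hblock.isExcursion.append_iff] at hw
    rw [hword]
    exact hblock.append (ih v' (by simp; omega) hw)
  have hvP : IsAntiperiodic (List.replicate (k + d + 1) A ++ (List.replicate (k + d + 1)
      (negL (negL c)) ++ (v' ++ List.replicate (k + 1) (negL c)))) := by
    by_cases hlt : d < g.count A
    · exact ih _ (by simp; omega) hv
      -- Here the word has the length of the original one, but the part after its blocks is shorter.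
    · exact ih_length _ (by simp; omega) hc' hv (fun w hw => ih w (by simp at hw ⊢; omega)) rfl
  exact (ih _ (by simp; omega) hu).replicate_append_cons hc hvP hw

theorem IsExcursion.isAntiperiodic (hw : IsExcursion step w) : IsAntiperiodic w := by
  induction hn : w.length using Nat.strong_induction_on generalizing w with
  | _ n ih =>
  subst hn
  rcases w with _ | ⟨b, l⟩
  · exact ⟨hw, rfl⟩
  obtain ⟨g, c', v, rfl, hret⟩ := hw.exists_isFirstReturn isCoherentStep_step
  obtain ⟨i, hb, hgi, hi⟩ := hret.exists_coordinate isCoherentStep_step hw.nonneg_head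
  have hg := hret.staysIn_of_isExcursion isCoherentStep_step hw
  obtain ⟨rfl, hiA, rfl⟩ : b = A ∧ i ≠ A ∧ c' = i := by
    cases b <;> cases i <;> cases c' <;> simp_all [step]
  obtain ⟨c, rfl⟩ := negL_involutive.surjective c'
  have hc : c ≠ A := by rintro rfl; exact hiA rfl
  obtain ⟨d, hd⟩ := Int.eq_ofNat_of_zero_le (by simpa using hg.end_mem c)
  have hwg := walk_step_eq_single hc hgi
  rw [hd] at hwg
  have hwv := (isExcursion_cons_append_iff hc hg hwg).1 hw
  have hlen := length_eq_sub_walk hc g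
  have hdA := walk_le_count_A g c
  have hdv : d + 1 ≤ v.length := by
    have h := congrFun ((isExcursion_replicate_append hc).1 hwv).2 c
    have := neg_walk_le_length v c
    simp only [Pi.add_apply, Pi.single_eq_same, Pi.zero_apply] at h
    omega
  refine IsAntiperiodic.cons_append_cons hc
    (ih _ (by simp; omega) ((isExcursion_append_replicate hc).2 ⟨hg, hwg⟩) rfl) ?_
  exact isAntiperiodic_replicate_append hc hwv fun w hw h => ih _ (by simp; omega) h rfl

end Antiperiodicity

section Toggles

variable {n i j : ℕ} {x y : KLetter} {a b l w : List KLetter}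

open Classical in
lemma tau_append_cons_cons (h : IsKrewerasWord n (a ++ x :: y :: b)) :
    tau n (a.length + 1) (a ++ x :: y :: b) =
      if 0 ≤ walk step a + step y then a ++ y :: x :: b else a ++ x :: y :: b := by
  have hK : IsKrewerasWord n (a ++ y :: x :: b) ↔ 0 ≤ walk step a + step y := by
    rw [isKrewerasWord_iff] at h ⊢
    obtain ⟨⟨hstay, hzero⟩, hlen⟩ := h
    have hxy : walk step a + step y + step x = walk step a + step x + step y := by abel
    simp only [IsExcursion, staysIn_append, staysIn_cons, walk_append, walk_cons, zero_add,
      ← add_assoc, hxy] at hstay hzero ⊢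
    simp_all
  simp [tau, hK]

lemma tau_of_length_le (hw : IsKrewerasWord n w) (hi : i = 0 ∨ w.length ≤ i) : tau n i w = w := by
  simp only [tau, ite_eq_right_iff]
  intro hw'
  rcases hi with rfl | hi
  · rcases w with _ | ⟨a, l⟩ <;> simp
  rw [List.set_eq_of_length_le (by simpa using hi), List.getD_eq_default _ _ hi] at hw' ⊢
  rcases lt_or_ge (i - 1) w.length with hlt | hge
  · obtain ⟨u, z, rfl⟩ := List.eq_nil_or_concat w |>.resolve_left (by rintro rfl; simp at hlt)
    have hlen : i - 1 = u.length := by simp at hi hlt; omega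
    have hA := hw.2.1.trans hw'.2.1.symm
    have hz : z = A := by
      by_contra hz
      simp [hlen, hz] at hA
    simp [hlen, hz]
  · exact List.set_eq_of_length_le hge

lemma exists_eq_append_cons_cons (hi : i ≠ 0) (hiw : i < w.length) :
    ∃ a x y b, w = a ++ x :: y :: b ∧ a.length + 1 = i := by
  obtain ⟨k, rfl⟩ := Nat.exists_eq_succ_of_ne_zero hi
  refine ⟨w.take k, w[k], w[k + 1], w.drop (k + 2), ?_, by simp; omega⟩
  rw [List.getElem_cons_drop, List.getElem_cons_drop, List.take_append_drop]

lemma isKrewerasWord_tau (hw : IsKrewerasWord n w) : IsKrewerasWord n (tau n i w) := by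
  simp only [tau]
  split_ifs with h
  exacts [h, hw]

lemma tau_tau (hw : IsKrewerasWord n w) : tau n i (tau n i w) = w := by
  by_cases hi : i = 0 ∨ w.length ≤ i
  · rw [tau_of_length_le hw hi, tau_of_length_le hw hi]
  push Not at hi
  obtain ⟨a, x, y, b, rfl, rfl⟩ := exists_eq_append_cons_cons hi.1 hi.2
  have hw' := isKrewerasWord_tau (i := a.length + 1) hw
  rw [tau_append_cons_cons hw] at hw' ⊢
  split_ifs at hw' ⊢ with h
  · have hx : 0 ≤ walk step a + step x := by
      have := (isKrewerasWord_iff.1 hw).1.1 (a ++ [x]) (by simp)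
      simpa using this
    rw [tau_append_cons_cons hw', if_pos hx]
  · rw [tau_append_cons_cons hw', if_neg h]

open Classical in
lemma tau_comm (hw : IsKrewerasWord n w) (hij : i + 2 ≤ j) :
    tau n i (tau n j w) = tau n j (tau n i w) := by
  have hlen (k : ℕ) : (tau n k w).length = w.length :=
    (isKrewerasWord_tau hw).1.trans hw.1.symm
  by_cases hi : i = 0
  · rw [tau_of_length_le (isKrewerasWord_tau hw) (.inl hi), tau_of_length_le hw (.inl hi)]
  by_cases hj : w.length ≤ j
  · rw [tau_of_length_le hw (.inr hj),
      tau_of_length_le (isKrewerasWord_tau hw) (.inr (by rwa [hlen]))]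
  obtain ⟨a, x, y, l, rfl, rfl⟩ := exists_eq_append_cons_cons (w := w) hi (by omega)
  obtain ⟨m, z, t, b, rfl, hm⟩ := exists_eq_append_cons_cons (w := l) (i := j - (a.length + 2))
    (by omega) (by simp at hj; omega)
  have hI (z t : KLetter) (h : IsKrewerasWord n (a ++ x :: y :: (m ++ z :: t :: b))) :=
    tau_append_cons_cons h
  have hJ (p q : KLetter) (hpq : step p + step q = step x + step y)
      (h : IsKrewerasWord n (a ++ p :: q :: (m ++ z :: t :: b))) :
      tau n j (a ++ p :: q :: (m ++ z :: t :: b)) =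
        if 0 ≤ walk step (a ++ x :: y :: m) + step t then a ++ p :: q :: (m ++ t :: z :: b)
        else a ++ p :: q :: (m ++ z :: t :: b) := by
    have hword : a ++ p :: q :: (m ++ z :: t :: b) = (a ++ p :: q :: m) ++ z :: t :: b := by simp
    have hj : j = (a ++ p :: q :: m).length + 1 := by simp; omega
    have hwalk : walk step (a ++ x :: y :: m) = walk step (a ++ p :: q :: m) := by
      simp only [walk_append, walk_cons, ← add_assoc (step _) (step _), hpq]
    rw [hword] at h ⊢
    rw [hj, tau_append_cons_cons h, hwalk]
    simp
  have hi' := isKrewerasWord_tau (i := a.length + 1) hw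
  have hj' := isKrewerasWord_tau (i := j) hw
  rw [hI _ _ hw] at hi' ⊢
  rw [hJ _ _ rfl hw] at hj' ⊢
  split_ifs at hi' hj' ⊢ <;> simp_all [add_comm]

end Toggles

section Slides

variable {n : ℕ} {c : KLetter} {d l w : List KLetter}

lemma tauAsc_succ' (n k j : ℕ) (w : List KLetter) :
    tauAsc n k (j + 1) w = tauAsc n (k + 1) j (tau n k w) := by
  induction j with
  | zero => rfl
  | succ j ih =>
    rw [tauAsc, ih, tauAsc, show k + (j + 1) = k + 1 + j by omega]

lemma tauDown_eq_tauAsc (n j : ℕ) (w : List KLetter) : tauDown n j w = tauAsc n 1 j w := by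
  induction j with
  | zero => rfl
  | succ j ih => rw [tauDown, tauAsc, ih, add_comm]

lemma tauAsc_append_cons_of_ne_A (hc : c ≠ A) (h : IsKrewerasWord n (d ++ c :: l)) :
    tauAsc n (d.length + 1) l.length (d ++ c :: l) = d ++ (l ++ [c]) := by
  induction l generalizing d with
  | nil => rfl
  | cons y l ih =>
    have hnonneg : 0 ≤ walk step d + step y := by
      have := (isKrewerasWord_iff.1 h).1.1 (d ++ [c, y]) ⟨l, by simp⟩
      have hy : 0 ≤ walk step d + (step c + step y) := by simpa using this
      exact hy.trans (by gcongr; exact add_le_of_nonpos_left (step_nonpos hc))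
    have htau := tau_append_cons_cons h
    rw [if_pos hnonneg] at htau
    have hK := isKrewerasWord_tau (i := d.length + 1) h
    have hword : d ++ y :: c :: l = (d ++ [y]) ++ c :: l := by simp
    rw [htau, hword] at hK
    rw [List.length_cons, tauAsc_succ', htau, hword]
    simpa using ih hK

lemma tauAsc_append_A_cons (h : IsKrewerasWord n (d ++ A :: l)) :
    tauAsc n (d.length + 1) l.length (d ++ A :: l) =
      d ++ exchangeFrom step A (walk step d + step A) l := by
  induction l generalizing d with
  | nil => rfl
  | cons y l ih =>
    have hstay := (isKrewerasWord_iff.1 h).1.1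
    have hd : 0 ≤ walk step d := by simpa using hstay d (List.prefix_append _ _)
    have hy : 0 ≤ walk step d + (step A + step y) := by
      simpa using hstay (d ++ [A, y]) ⟨l, by simp⟩
    have hret : (∃ i, step A i ≠ 0 ∧ (walk step d + step A) i + step y i = 0) ↔
        ¬ 0 ≤ walk step d + step y := by
      refine ⟨fun ⟨i, hi, h0⟩ hnonneg => ?_, fun hneg => ?_⟩
      · have := hnonneg i
        have := (step_A_nonneg i).lt_of_ne' hi
        simp only [Pi.add_apply, Pi.zero_apply] at *
        omega
      · by_contra! hne
        refine hneg fun i => ?_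
        have := hd i
        have := hy i
        have := hne i
        cases i <;> simp [step] at * <;> omega
    have hK := isKrewerasWord_tau (i := d.length + 1) h
    rw [exchangeFrom, List.length_cons, tauAsc_succ']
    by_cases hnonneg : 0 ≤ walk step d + step y
    · have hword : d ++ y :: A :: l = (d ++ [y]) ++ A :: l := by simp
      rw [tau_append_cons_cons h, if_pos hnonneg, hword] at hK ⊢
      rw [if_neg (mt hret.1 (not_not_intro hnonneg))]
      simpa [add_right_comm] using ih hK
    · have hyA : y ≠ A := by
        rintro rfl
        exact hnonneg (add_nonneg hd step_A_nonneg)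
      have hword : d ++ A :: y :: l = (d ++ [A]) ++ y :: l := by simp
      rw [tau_append_cons_cons h, if_neg hnonneg, if_pos (hret.2 hnonneg), hword]
      rw [hword] at h
      simpa using tauAsc_append_cons_of_ne_A hyA h

lemma tauAsc_eq_exchange (hw : IsKrewerasWord n w) :
    tauAsc n 1 (3 * n - 1) w = exchange step w := by
  rw [← hw.1]
  rcases w with _ | ⟨a, l⟩
  · rfl
  have ha := (isKrewerasWord_iff.1 hw).1.nonneg_head
  obtain rfl : a = A := by
    by_contra h
    have := ha a
    simp [step, h] at this
  simpa [exchange] using tauAsc_append_A_cons (d := []) hw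

end Slides

section Evacuation

variable {M : Type*} [Monoid M] (t : ℕ → M)

/-- The product `t (k + m - 1) * ⋯ * t (k + 1) * t k`, the abstract form of `tauAsc`. -/
def ascProd (k : ℕ) : ℕ → M
  | 0 => 1
  | m + 1 => t (k + m) * ascProd k m

/-- The abstract form of `evacAux`. -/
def evacProd : ℕ → M
  | 0 => 1
  | j + 1 => evacProd j * ascProd t 1 (j + 1)

/-- The abstract form of `evacStarAux`, for words of length `N`. -/
def evacStarProd (N : ℕ) : ℕ → M
  | 0 => 1
  | j + 1 => evacStarProd N j * ascProd t (j + 1) (N - (j + 1))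

variable {t}

lemma ascProd_add (k m m' : ℕ) : ascProd t k (m + m') = ascProd t (k + m) m' * ascProd t k m := by
  induction m' with
  | zero => simp [ascProd]
  | succ m' ih => rw [← add_assoc, ascProd, ih, ascProd, mul_assoc, add_assoc]

lemma commute_ascProd (hcomm : ∀ i j, i + 2 ≤ j → Commute (t i) (t j)) {i k m : ℕ}
    (h : k + m + 1 ≤ i) : Commute (ascProd t k m) (t i) := by
  induction m with
  | zero => exact Commute.one_left _
  | succ m ih => exact (hcomm _ _ (by omega)).mul_left (ih (by omega))

lemma commute_evacProd (hcomm : ∀ i j, i + 2 ≤ j → Commute (t i) (t j)) {i j : ℕ}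
    (h : j + 2 ≤ i) : Commute (evacProd t j) (t i) := by
  induction j with
  | zero => exact Commute.one_left _
  | succ j ih => exact (ih (by omega)).mul_left (commute_ascProd hcomm (by omega))

lemma commute_evacProd_ascProd (hcomm : ∀ i j, i + 2 ≤ j → Commute (t i) (t j)) {j k : ℕ}
    (h : j + 2 ≤ k) (m : ℕ) : Commute (evacProd t j) (ascProd t k m) := by
  induction m with
  | zero => exact Commute.one_right _
  | succ m ih => exact (commute_evacProd hcomm (by omega)).mul_right ih

lemma ascProd_pow (hcomm : ∀ i j, i + 2 ≤ j → Commute (t i) (t j)) {N k : ℕ} (hk : k + 1 ≤ N) :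
    ascProd t 1 (N - 1) ^ (k + 1) = evacStarProd t N (k + 1) * evacProd t k := by
  induction k with
  | zero => simp [evacStarProd, evacProd]
  | succ k ih =>
    have hsplit : ascProd t 1 (N - 1) = ascProd t (k + 2) (N - (k + 2)) * ascProd t 1 (k + 1) := by
      rw [show N - 1 = k + 1 + (N - (k + 2)) by omega, ascProd_add, add_comm 1, add_assoc]
    calc ascProd t 1 (N - 1) ^ (k + 1 + 1)
      _ = evacStarProd t N (k + 1) * evacProd t k *
          (ascProd t (k + 2) (N - (k + 2)) * ascProd t 1 (k + 1)) := by
        rw [pow_succ, ih (by omega), hsplit]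
      _ = evacStarProd t N (k + 1) * ascProd t (k + 2) (N - (k + 2)) *
          (evacProd t k * ascProd t 1 (k + 1)) := by
        simp only [mul_assoc]
        rw [(commute_evacProd_ascProd hcomm le_rfl _).left_comm]
      _ = evacStarProd t N (k + 1 + 1) * evacProd t (k + 1) := rfl

lemma ascProd_mul_evacProd (hcomm : ∀ i j, i + 2 ≤ j → Commute (t i) (t j))
    (ht : ∀ i, t i * t i = 1) (j : ℕ) :
    ascProd t 1 (j + 1) * evacProd t (j + 1) = evacProd t j := by
  induction j with
  | zero => simp [evacProd, ascProd, ht]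
  | succ j ih =>
    have hasc : ascProd t 1 (j + 1 + 1) = t (1 + (j + 1)) * ascProd t 1 (j + 1) := rfl
    calc ascProd t 1 (j + 1 + 1) * evacProd t (j + 1 + 1)
      _ = t (1 + (j + 1)) * (ascProd t 1 (j + 1) * evacProd t (j + 1)) *
          (t (1 + (j + 1)) * ascProd t 1 (j + 1)) := by
        rw [evacProd, hasc]
        simp only [mul_assoc]
      _ = t (1 + (j + 1)) * t (1 + (j + 1)) * (evacProd t j * ascProd t 1 (j + 1)) := by
        rw [ih]
        simp only [mul_assoc]
        rw [(commute_evacProd hcomm (by omega)).left_comm]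
      _ = evacProd t (j + 1) := by rw [ht, one_mul, evacProd]

lemma evacProd_mul_self (hcomm : ∀ i j, i + 2 ≤ j → Commute (t i) (t j))
    (ht : ∀ i, t i * t i = 1) (j : ℕ) : evacProd t j * evacProd t j = 1 := by
  induction j with
  | zero => simp [evacProd]
  | succ j ih =>
    nth_rw 1 [evacProd]
    rw [mul_assoc, ascProd_mul_evacProd hcomm ht, ih]

theorem evacStarProd_eq_pow_mul_evacProd (hcomm : ∀ i j, i + 2 ≤ j → Commute (t i) (t j))
    (ht : ∀ i, t i * t i = 1) (N : ℕ) :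
    evacStarProd t N (N - 1) = ascProd t 1 (N - 1) ^ N * evacProd t (N - 1) := by
  rcases N with _ | N
  · simp [evacStarProd, evacProd]
  rw [ascProd_pow hcomm (k := N) (by simp), mul_assoc, Nat.add_sub_cancel,
    evacProd_mul_self hcomm ht, mul_one, evacStarProd, Nat.sub_self, ascProd, mul_one]

end Evacuation

section Permutations

variable {n : ℕ}

/-- The toggle `tau n i` as a permutation of the Kreweras words of length `3 * n`. -/
noncomputable def tauPerm (n i : ℕ) : Equiv.Perm {w : List KLetter // IsKrewerasWord n w} :=
  Function.Involutive.toPerm (fun w => ⟨tau n i w, isKrewerasWord_tau w.2⟩)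
    fun w => Subtype.ext (tau_tau w.2)

lemma tauPerm_mul_self (n i : ℕ) : tauPerm n i * tauPerm n i = 1 :=
  Equiv.ext fun w => Subtype.ext (tau_tau w.2)

lemma commute_tauPerm {i j : ℕ} (hij : i + 2 ≤ j) : Commute (tauPerm n i) (tauPerm n j) :=
  Equiv.ext fun w => Subtype.ext (tau_comm w.2 hij)

variable (w : {w : List KLetter // IsKrewerasWord n w})

lemma coe_ascProd_tauPerm (k m : ℕ) : (ascProd (tauPerm n) k m w : List KLetter) =
    tauAsc n k m w := by
  induction m with
  | zero => rfl
  | succ m ih => exact congrArg (tau n (k + m)) ih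

lemma coe_evacProd_tauPerm (j : ℕ) : (evacProd (tauPerm n) j w : List KLetter) =
    evacAux n j w := by
  induction j generalizing w with
  | zero => rfl
  | succ j ih =>
    rw [evacProd, Equiv.Perm.mul_apply, ih, coe_ascProd_tauPerm, evacAux, tauDown_eq_tauAsc]

lemma coe_evacStarProd_tauPerm (j : ℕ) : (evacStarProd (tauPerm n) (3 * n) j w : List KLetter) =
    evacStarAux n j w := by
  induction j generalizing w with
  | zero => rfl
  | succ j ih => rw [evacStarProd, Equiv.Perm.mul_apply, ih, coe_ascProd_tauPerm, evacStarAux]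

lemma coe_ascProd_tauPerm_pow (k : ℕ) :
    ((ascProd (tauPerm n) 1 (3 * n - 1) ^ k) w : List KLetter) = (exchange step)^[k] w := by
  induction k with
  | zero => rfl
  | succ k ih =>
    rw [pow_succ', Equiv.Perm.mul_apply, coe_ascProd_tauPerm, tauAsc_eq_exchange (Subtype.prop _),
      ih, Function.iterate_succ_apply']

end Permutations

end Kreweras

open Kreweras

/-- Dual evacuation of a Kreweras word is obtained from its evacuation by swapping
all `B`'s and `C`'s. -/
theorem evacStar_eq_evac_swap (n : ℕ) (w : List KLetter) (hw : IsKrewerasWord n w) :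
    evacStar n w = (evac n w).map negL := by
  let x : {w : List KLetter // IsKrewerasWord n w} := ⟨w, hw⟩
  let y := evacProd (tauPerm n) (3 * n - 1) x
  have hy : (y : List KLetter) = evac n w := coe_evacProd_tauPerm x _
  calc evacStar n w
    _ = evacStarProd (tauPerm n) (3 * n) (3 * n - 1) x := (coe_evacStarProd_tauPerm x _).symm
    _ = (ascProd (tauPerm n) 1 (3 * n - 1) ^ (3 * n)) y := by
      rw [evacStarProd_eq_pow_mul_evacProd (fun _ _ => commute_tauPerm) (tauPerm_mul_self n)]
      rfl
    _ = (exchange step)^[(y : List KLetter).length] y := by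
      rw [coe_ascProd_tauPerm_pow, y.2.1]
    _ = (evac n w).map negL := by
      rw [(isKrewerasWord_iff.1 y.2).1.isAntiperiodic.iterate_exchange, hy]
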